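/- Suppose A has the geometric distribution with parameter p, where 1/2 < p < 1, i.e., ℙ[A = k] = (1−p)^k · p for k ∈ ℕ. Then E[X] is finite and the parameter is recovered from the first moment by p = E[X] / (2·E[X] − 1). -/

import Mathlib

open MeasureTheory ProbabilityTheory ENNReal

/-!
Independence and `X =_d A * X + 1` give `E[X] = E[A] * E[X] + 1`, which determines `E[X]` only once
it is known to be finite. Finiteness comes from truncation: as `A` is integer valued,
`min (A * X + 1) M ≤ A * min X M + 1`, hence `E[min X M] ≤ E[A] * E[min X M] + 1`. All terms of this
inequality are finite, so `E[A] < 1` bounds `E[min X M]` by `1 / (1 - E[A])` uniformly in `M`, and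
monotone convergence bounds `E[X]`. For the geometric law `E[A] = (1 - p) / p < 1`, so
`E[X] = p / (2 * p - 1)`.
-/

section ENNRealInequalities

theorem min_natCast_mul_add_le (a : ℕ) (x b M : ℝ≥0∞) :
    min (a * x + b) M ≤ a * min x M + b := by
  rcases Nat.eq_zero_or_pos a with rfl | ha
  · simp
  have hM : M ≤ a * M := le_mul_of_one_le_left' (Nat.one_le_cast.mpr ha)
  rw [mul_min, ← min_add_add_right]
  exact min_le_min_left _ (hM.trans le_self_add)

variable {a b x : ℝ≥0∞}

theorem le_div_one_sub_of_le_mul_add (ha : a < 1) (hx : x ≠ ∞) (h : x ≤ a * x + b) :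
    x ≤ b / (1 - a) := by
  rw [ENNReal.le_div_iff_mul_le (.inl (tsub_pos_of_lt ha).ne') (.inl (by finiteness)), mul_comm,
    ENNReal.sub_mul fun _ _ ↦ hx, one_mul]
  exact tsub_le_iff_left.mpr h

theorem div_one_sub_le_of_mul_add_le (h : a * x + b ≤ x) : b / (1 - a) ≤ x := by
  rcases eq_or_ne x ∞ with rfl | hx
  · exact le_top
  rcases eq_or_ne (a * x) ∞ with hax | hax
  · exact absurd (top_le_iff.mp (by simpa [hax] using h)) hx
  refine ENNReal.div_le_of_le_mul' ?_
  rw [ENNReal.sub_mul fun _ _ ↦ hx, one_mul]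
  exact ENNReal.le_sub_of_add_le_left hax h

end ENNRealInequalities

section AffineFixedPoint

variable {Ω : Type*} [MeasurableSpace Ω] {P : Measure Ω}

theorem lintegral_eq_iSup_lintegral_min_natCast {X : Ω → ℝ≥0∞} (hX : AEMeasurable X P) :
    ∫⁻ ω, X ω ∂P = ⨆ M : ℕ, ∫⁻ ω, min (X ω) M ∂P := by
  have h_mono (ω : Ω) : Monotone fun M : ℕ ↦ min (X ω) M :=
    fun _ _ hMN ↦ min_le_min_left _ (Nat.cast_le.mpr hMN)
  rw [← lintegral_iSup' (fun M ↦ hX.min aemeasurable_const) (.of_forall h_mono)]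
  simp only [← inf_iSup_eq, ENNReal.iSup_natCast, le_top, inf_of_le_left]

theorem lintegral_mul_add_of_indepFun {A X : Ω → ℝ≥0∞} (hA : AEMeasurable A P)
    (hX : AEMeasurable X P) (hAX : IndepFun A X P) (B : Ω → ℝ≥0∞) :
    ∫⁻ ω, (A ω * X ω + B ω) ∂P = (∫⁻ ω, A ω ∂P) * ∫⁻ ω, X ω ∂P + ∫⁻ ω, B ω ∂P := by
  rw [lintegral_add_left' (by fun_prop),
    lintegral_mul_eq_lintegral_mul_lintegral_of_indepFun'' hA hX hAX]

theorem lintegral_eq_mul_add_of_identDistrib {A B X : Ω → ℝ≥0∞} (hA : AEMeasurable A P)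
    (hAX : IndepFun A X P) (hfix : IdentDistrib X (fun ω ↦ A ω * X ω + B ω) P P) :
    ∫⁻ ω, X ω ∂P = (∫⁻ ω, A ω ∂P) * ∫⁻ ω, X ω ∂P + ∫⁻ ω, B ω ∂P :=
  hfix.lintegral_eq.trans (lintegral_mul_add_of_indepFun hA hfix.aemeasurable_fst hAX B)

variable {A : Ω → ℕ} {B X : Ω → ℝ≥0∞}

theorem lintegral_min_le_of_identDistrib (hA : AEMeasurable A P) (hAX : IndepFun A X P)
    (hfix : IdentDistrib X (fun ω ↦ A ω * X ω + B ω) P P) (M : ℝ≥0∞) :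
    ∫⁻ ω, min (X ω) M ∂P ≤
      (∫⁻ ω, (A ω : ℝ≥0∞) ∂P) * ∫⁻ ω, min (X ω) M ∂P + ∫⁻ ω, B ω ∂P := by
  have h_min : Measurable fun x : ℝ≥0∞ ↦ min x M := by fun_prop
  have hA' : AEMeasurable (fun ω ↦ (A ω : ℝ≥0∞)) P := by fun_prop
  have hX : AEMeasurable (fun ω ↦ min (X ω) M) P :=
    h_min.comp_aemeasurable hfix.aemeasurable_fst
  calc ∫⁻ ω, min (X ω) M ∂P
      = ∫⁻ ω, min (A ω * X ω + B ω) M ∂P := (hfix.comp h_min).lintegral_eq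
    _ ≤ ∫⁻ ω, (A ω * min (X ω) M + B ω) ∂P :=
      lintegral_mono fun ω ↦ min_natCast_mul_add_le (A ω) (X ω) (B ω) M
    _ = (∫⁻ ω, (A ω : ℝ≥0∞) ∂P) * ∫⁻ ω, min (X ω) M ∂P + ∫⁻ ω, B ω ∂P :=
      lintegral_mul_add_of_indepFun hA' hX (hAX.comp .of_discrete h_min) B

theorem lintegral_eq_div_one_sub_of_identDistrib [IsFiniteMeasure P] (hA : AEMeasurable A P)
    (hAX : IndepFun A X P) (hfix : IdentDistrib X (fun ω ↦ A ω * X ω + B ω) P P)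
    (hA_lt : ∫⁻ ω, (A ω : ℝ≥0∞) ∂P < 1) :
    ∫⁻ ω, X ω ∂P = (∫⁻ ω, B ω ∂P) / (1 - ∫⁻ ω, (A ω : ℝ≥0∞) ∂P) := by
  have h_finite (M : ℕ) : ∫⁻ ω, min (X ω) M ∂P ≠ ∞ :=
    ((lintegral_mono fun _ ↦ min_le_right _ _).trans_lt
      (lintegral_const_lt_top (ENNReal.natCast_ne_top M))).ne
  have hA' : AEMeasurable (fun ω ↦ (A ω : ℝ≥0∞)) P := by fun_prop
  refine le_antisymm ?_ (div_one_sub_le_of_mul_add_le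
    (lintegral_eq_mul_add_of_identDistrib hA' (hAX.comp .of_discrete measurable_id) hfix).ge)
  rw [lintegral_eq_iSup_lintegral_min_natCast hfix.aemeasurable_fst]
  exact iSup_le fun M ↦ le_div_one_sub_of_le_mul_add hA_lt (h_finite M)
    (lintegral_min_le_of_identDistrib hA hAX hfix M)

end AffineFixedPoint

section Geometric

variable {Ω : Type*} [MeasurableSpace Ω] {P : Measure Ω} {A : Ω → ℕ} {p : unitInterval}

theorem lintegral_natCast_geometricMeasure (hp : p ≠ 0) :
    ∫⁻ n, (n : ℝ≥0∞) ∂geometricMeasure p = ENNReal.ofReal ((1 - p) / p) := by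
  have hp_pos : (0 : ℝ) < p := unitInterval.pos_iff_ne_zero.mpr hp
  have h_norm : ‖(1 - p : ℝ)‖ < 1 := by
    rw [Real.norm_of_nonneg (sub_nonneg.mpr p.2.2)]
    linarith
  have h_value : (1 - p : ℝ) / (1 - (1 - p)) ^ 2 * p = (1 - p) / p := by
    rw [_root_.sub_sub_cancel]
    field_simp
  have h_sum : HasSum (fun n : ℕ ↦ n * ((1 - p : ℝ) ^ n * p)) ((1 - p) / p) := by
    rw [← h_value]
    simpa only [mul_assoc] using
      (hasSum_coe_mul_geometric_of_norm_lt_one h_norm).mul_right (p : ℝ)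
  rw [lintegral_countable', ← h_sum.tsum_eq, ENNReal.ofReal_tsum_of_nonneg
    (fun n ↦ mul_nonneg n.cast_nonneg (geometricMeasure_nonneg p n)) h_sum.summable]
  simp only [geometricMeasure_singleton hp, ENNReal.ofReal_mul (Nat.cast_nonneg _),
    ENNReal.ofReal_natCast]

theorem hasLaw_geometricMeasure (hA : AEMeasurable A P) (hp : p ≠ 0)
    (hgeo : ∀ k : ℕ, P {ω | A ω = k} = ENNReal.ofReal ((1 - p) ^ k * p)) :
    HasLaw A (geometricMeasure p) P where
  aemeasurable := hA
  map_eq := Measure.ext_of_singleton fun k ↦ by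
    rw [geometricMeasure_singleton hp, ← hgeo,
      Measure.map_apply_of_aemeasurable hA (measurableSet_singleton k)]
    rfl

theorem lintegral_eq_of_hasLaw_geometricMeasure {X : Ω → ℝ≥0∞} (hp : 1 / 2 < (p : ℝ))
    (hA : HasLaw A (geometricMeasure p) P) (hAX : IndepFun A X P)
    (hfix : IdentDistrib X (fun ω ↦ A ω * X ω + 1) P P) :
    ∫⁻ ω, X ω ∂P = ENNReal.ofReal (p / (2 * p - 1)) := by
  have : IsProbabilityMeasure P := hA.isProbabilityMeasure
  have hp_pos : (0 : ℝ) < p := by linarith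
  have hEA : ∫⁻ ω, (A ω : ℝ≥0∞) ∂P = ENNReal.ofReal ((1 - p) / p) := by
    rw [← lintegral_natCast_geometricMeasure (unitInterval.pos_iff_ne_zero.mp hp_pos)]
    exact hA.lintegral_comp Measurable.of_discrete.aemeasurable
  have h_lt : (1 - p : ℝ) / p < 1 := by rw [div_lt_one hp_pos]; linarith
  have h_one_sub : 1 - (1 - p : ℝ) / p = (2 * p - 1) / p := by
    field_simp
    ring
  rw [lintegral_eq_div_one_sub_of_identDistrib hA.aemeasurable hAX hfix
      (hEA ▸ ENNReal.ofReal_lt_one.mpr h_lt), hEA, lintegral_one, measure_univ,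
    ← ENNReal.ofReal_one, ← ENNReal.ofReal_sub _ (div_nonneg (by linarith [p.2.2]) hp_pos.le),
    ← ENNReal.ofReal_div_of_pos (sub_pos.mpr h_lt), h_one_sub, one_div_div]

end Geometric

theorem stmt_18_general {Ω : Type*} [MeasurableSpace Ω] {P : Measure Ω} [IsProbabilityMeasure P]
    {A : Ω → ℕ} {X : Ω → ℝ≥0∞} (hA : AEMeasurable A P) (hAX : IndepFun A X P)
    (hfix : IdentDistrib X (fun ω ↦ A ω * X ω + 1) P P) {p : ℝ} (hp : 1 / 2 < p)
    (hgeo : ∀ k : ℕ, P {ω | A ω = k} = ENNReal.ofReal ((1 - p) ^ k * p)) :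
    ∫⁻ ω, X ω ∂P < ∞ ∧
      p = (∫⁻ ω, X ω ∂P).toReal / (2 * (∫⁻ ω, X ω ∂P).toReal - 1) := by
  have hp_pos : 0 < p := by linarith
  have h_two : 0 < 2 * p - 1 := by linarith
  have hp_le : p ≤ 1 := by simpa using (hgeo 0).symm.trans_le prob_le_one
  have h_mean : ∫⁻ ω, X ω ∂P = ENNReal.ofReal (p / (2 * p - 1)) := by
    lift p to unitInterval using ⟨hp_pos.le, hp_le⟩
    have h_law := hasLaw_geometricMeasure hA (unitInterval.pos_iff_ne_zero.mp hp_pos) hgeo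
    exact lintegral_eq_of_hasLaw_geometricMeasure hp h_law hAX hfix
  have h_denom : 2 * (p / (2 * p - 1)) - 1 = 1 / (2 * p - 1) := by
    field_simp
    ring
  rw [h_mean, ENNReal.toReal_ofReal (by positivity), h_denom, div_div_div_cancel_right₀ h_two.ne',
    div_one]
  exact ⟨ENNReal.ofReal_lt_top, rfl⟩

theorem stmt_18 {Ω : Type*} [MeasurableSpace Ω] {P : Measure Ω} [IsProbabilityMeasure P]
    {A X : Ω → ℕ} (hA : Measurable A) (hX : Measurable X)
    (hAX : IndepFun A X P)
    (h0 : 0 < P {ω | A ω = 0})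
    (hfix : Measure.map X P = Measure.map (fun ω => A ω * X ω + 1) P)
    (p : ℝ) (hp0 : 1 / 2 < p) (hp1 : p < 1)
    (hgeo : ∀ k : ℕ, P {ω | A ω = k} = ENNReal.ofReal ((1 - p) ^ k * p)) :
    (∫⁻ ω, (X ω : ℝ≥0∞) ∂P) < ⊤ ∧
    p = (∫⁻ ω, (X ω : ℝ≥0∞) ∂P).toReal /
        (2 * (∫⁻ ω, (X ω : ℝ≥0∞) ∂P).toReal - 1) := by
  have h_cast : Measurable (Nat.cast : ℕ → ℝ≥0∞) := .of_discrete
  have h_ident : IdentDistrib (fun ω ↦ (X ω : ℝ≥0∞)) (fun ω ↦ A ω * X ω + 1) P P := by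
    simpa [Function.comp_def] using
      IdentDistrib.comp ⟨hX.aemeasurable, by fun_prop, hfix⟩ h_cast
  exact stmt_18_general hA.aemeasurable (hAX.comp measurable_id h_cast) h_ident hp0 hgeo
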